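/- For every positive integer t, the polynomial identity (y+1)^{2t} − 1 = −∑_{i=0}^{t−1} binom(2t−i−1, i)·(1+y)^i·y^{2t−2i} + 2·∑_{i=0}^{t−1} binom(2t−i−1, i)·(1+y)^{i+1}·y^{2t−2i−1} holds in the polynomial ring ℤ[y]. -/

import Mathlib

/-!
With `s = 1 + y`, both sums on the right are multiples of
`S n = ∑ i, binom(n - i, i) s ^ i y ^ (n - 2 i)` at `n = 2 t - 1`: the right side is
`(-y + 2 s) S (2 t - 1) = (y + 2) S (2 t - 1)`. Pascal's rule gives the Lucas-type recurrence
`S (n + 2) = y S (n + 1) + s S n`, whose characteristic polynomial `x ^ 2 - y x - (1 + y)` has the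
roots `1 + y` and `-1`. Hence `(y + 2) S n = (1 + y) ^ (n + 1) + (-1) ^ n`, which is the
left side for `n = 2 t - 1`.
-/

open Polynomial

/-- The bivariate Fibonacci polynomial `∑ binom(a, b) s ^ b y ^ (a - b)` over `a + b = n`, at
`s = 1 + y`. Truncation of `a - b` is harmless, as `binom(a, b) = 0` when `a < b`. -/
noncomputable def lucasSum (n : ℕ) : ℤ[X] :=
  ∑ p ∈ Finset.HasAntidiagonal.antidiagonal n, C ((p.1.choose p.2 : ℤ)) * (1 + X) ^ p.2 * X ^ (p.1 - p.2)

lemma lucasSum_add_two (n : ℕ) :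
    lucasSum (n + 2) = X * lucasSum (n + 1) + (1 + X) * lucasSum n := by
  have key : ∀ a b : ℕ, C (((a + 1).choose (b + 1) : ℤ)) * (1 + X : ℤ[X]) ^ (b + 1) *
        X ^ (a + 1 - (b + 1)) =
      X * (C ((a.choose (b + 1) : ℤ)) * (1 + X) ^ (b + 1) * X ^ (a - (b + 1))) +
        (1 + X) * (C ((a.choose b : ℤ)) * (1 + X) ^ b * X ^ (a - b)) := by
    intro a b
    rw [Nat.choose_succ_succ, Nat.add_sub_add_right]
    rcases Nat.lt_or_ge a (b + 1) with h | h
    · rw [Nat.choose_eq_zero_of_lt h]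
      simp
      ring
    · obtain ⟨c, rfl⟩ := Nat.exists_eq_add_of_le h
      rw [show b + 1 + c - b = c + 1 by omega, show b + 1 + c - (b + 1) = c by omega]
      push_cast
      rw [C_add]
      ring
  unfold lucasSum
  rw [Finset.Nat.antidiagonal_succ_succ', Finset.Nat.antidiagonal_succ' (n := n)]
  simp only [Finset.sum_cons, Finset.sum_map, Function.Embedding.prodMap, Prod.map,
    Function.Embedding.coeFn_mk, Function.Embedding.refl_apply, Nat.succ_eq_add_one, key,
    Finset.sum_add_distrib, ← Finset.mul_sum]
  simp
  ring

lemma lucasSum_closed (n : ℕ) :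
    (X + 2) * lucasSum n = (1 + X) ^ (n + 1) + (-1) ^ n := by
  induction n using Nat.twoStepInduction with
  | zero => simp [lucasSum]; ring
  | one => simp [lucasSum, Finset.Nat.antidiagonal_succ]; ring
  | more n h0 h1 =>
    rw [lucasSum_add_two]
    linear_combination X * h1 + (1 + X) * h0

/-- For `n = 2 k + 1` the terms with index `i > k` vanish. -/
lemma lucasSum_odd (k : ℕ) :
    lucasSum (2 * k + 1) = ∑ i ∈ Finset.range (k + 1),
      C (((2 * k + 1 - i).choose i : ℤ)) * (1 + X) ^ i * X ^ (2 * k + 1 - 2 * i) := by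
  unfold lucasSum
  rw [← Finset.Nat.sum_antidiagonal_swap, Finset.Nat.sum_antidiagonal_eq_sum_range_succ_mk]
  symm
  refine Finset.sum_subset_zero_on_sdiff ?_ ?_ ?_
  · intro i hi
    simp only [Finset.mem_range] at hi ⊢
    omega
  · intro i hi
    simp only [Finset.mem_sdiff, Finset.mem_range] at hi
    simp [Nat.choose_eq_zero_of_lt (show 2 * k + 1 - i < i by omega)]
  · intro i hi
    simp only [Prod.swap]
    rw [show 2 * k + 1 - i - i = 2 * k + 1 - 2 * i by omega]

theorem poly_identity_G_even (t : ℕ) (ht : 0 < t) :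
    ((X + 1 : ℤ[X]) ^ (2 * t) - 1) =
      -∑ i ∈ Finset.range t,
          C (((2 * t - i - 1).choose i : ℤ)) * (1 + X) ^ i * X ^ (2 * t - 2 * i) +
        2 * ∑ i ∈ Finset.range t,
          C (((2 * t - i - 1).choose i : ℤ)) * (1 + X) ^ (i + 1) * X ^ (2 * t - 2 * i - 1) := by
  obtain ⟨k, rfl⟩ := Nat.exists_eq_add_of_le' ht
  have h1 : ∑ i ∈ Finset.range (k + 1),
      C (((2 * (k + 1) - i - 1).choose i : ℤ)) * (1 + X : ℤ[X]) ^ i * X ^ (2 * (k + 1) - 2 * i) =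
      X * lucasSum (2 * k + 1) := by
    rw [lucasSum_odd, Finset.mul_sum]
    refine Finset.sum_congr rfl fun i hi => ?_
    rw [Finset.mem_range] at hi
    rw [show 2 * (k + 1) - i - 1 = 2 * k + 1 - i by omega,
      show 2 * (k + 1) - 2 * i = 2 * k + 1 - 2 * i + 1 by omega]
    ring
  have h2 : ∑ i ∈ Finset.range (k + 1),
      C (((2 * (k + 1) - i - 1).choose i : ℤ)) * (1 + X : ℤ[X]) ^ (i + 1) *
        X ^ (2 * (k + 1) - 2 * i - 1) =
      (1 + X) * lucasSum (2 * k + 1) := by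
    rw [lucasSum_odd, Finset.mul_sum]
    refine Finset.sum_congr rfl fun i hi => ?_
    rw [show 2 * (k + 1) - i - 1 = 2 * k + 1 - i by omega,
      show 2 * (k + 1) - 2 * i - 1 = 2 * k + 1 - 2 * i by omega]
    ring
  rw [h1, h2]
  have h := lucasSum_closed (2 * k + 1)
  rw [Odd.neg_one_pow ⟨k, rfl⟩] at h
  linear_combination -h
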